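/- arXiv:2408.13183 — 2 statements merged into one kernel-verified Lean document; each statement's English description precedes it below -/
import Mathlib

section
/- Let H ≥ 1, n ≥ 1, and let x^1, …, x^n : Fin H → ℝ be sample paths such that for every t the values x^1_t, …, x^n_t are pairwise distinct. Let q^u, q^l ∈ ℝ^H and let m be an integer with 1 ≤ m ≤ n. Assume the band (q^l, q^u) covers strictly fewer than m of the n sample paths. Let (l̂, û) be an optimal solution of (NP) and let w* = Σ_t (û_t − l̂_t) be its width. Define W = {(l, u) : u_t ≥ q^u_t and l_t ≤ q^l_t for all t, and Σ_t (u_t − l_t) ≤ w*}. Then: (i) every band (l, u) ∈ W covers at most m of the n sample paths, and (ii) some band in W (namely (l̂, û)) covers exactly m of them. In other words, the maximum number of covered paths over W equals m. -/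
/-!
A band in `W` covering more than `m` paths would be feasible for the nominal problem, of width at
most the minimum. It cannot coincide with `(q^l, q^u)`, which covers fewer than `m` paths, so at
some time `t` one of its two bounds is strictly away from its quantile and can be moved inward. As
the values at time `t` are pairwise distinct, at most one covered path touches that bound, so a
small enough move loses at most one path (`exists_upper_shrink` for the upper bound,
`exists_lower_shrink`, its mirror image, for the lower). The resulting band still covers at least
`m` paths and is strictly narrower than the optimum, a contradiction. Applied to `(l̂, û)` itself,
this bounds its coverage by `m`, and feasibility gives the reverse inequality.
-/

/-- The number of the `n` sample paths `x 0, …, x (n-1)` covered by the band `(l, u)`: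
a path `x i` is covered if `l t ≤ x i t ≤ u t` for all `t`. -/
noncomputable def coverCount {H n : ℕ} (x : Fin n → Fin H → ℝ) (l u : Fin H → ℝ) : ℕ :=
  Nat.card {i : Fin n // ∀ t, l t ≤ x i t ∧ x i t ≤ u t}

/-- Negating all paths and exchanging the two bounds preserves coverage. -/
lemma coverCount_neg {H n : ℕ} (x : Fin n → Fin H → ℝ) (l u : Fin H → ℝ) :
    coverCount (fun i t => -x i t) (fun t => -u t) (fun t => -l t) = coverCount x l u := by
  unfold coverCount
  refine Nat.card_congr (Equiv.subtypeEquivRight fun i => forall_congr' fun t => ?_)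
  rw [neg_le_neg_iff, neg_le_neg_iff, and_comm]

lemma exists_upper_shrink {H n : ℕ} (x : Fin n → Fin H → ℝ)
    (hdist : ∀ t : Fin H, Function.Injective fun i => x i t)
    (q l u : Fin H → ℝ) (hqu : ∀ t, q t ≤ u t) (t : Fin H) (ht : q t < u t) :
    ∃ u' : Fin H → ℝ, (∀ s, q s ≤ u' s) ∧ ∑ s, u' s < ∑ s, u s ∧
      coverCount x l u ≤ coverCount x l u' + 1 := by
  classical
  -- A level `v < u t` above `q t` and above all path values at time `t` that are below `u t`.
  obtain ⟨v, hvu, hqv, hv⟩ : ∃ v, v < u t ∧ q t ≤ v ∧ ∀ i, x i t < u t → x i t ≤ v := by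
    have above : ∀ a : ℝ, a < u t → ∀ᶠ v in nhdsWithin (u t) (Set.Iio (u t)), a ≤ v :=
      fun a ha => nhdsWithin_le_nhds ((lt_mem_nhds ha).mono fun _ h => le_of_lt h)
    have hall : ∀ᶠ v in nhdsWithin (u t) (Set.Iio (u t)), ∀ i, x i t < u t → x i t ≤ v := by
      refine Filter.eventually_all.2 fun i => ?_
      by_cases hi : x i t < u t
      · exact (above _ hi).mono fun _ h _ => h
      · exact Filter.Eventually.of_forall fun _ h => absurd h hi
    exact (eventually_mem_nhdsWithin.and ((above _ ht).and hall)).exists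
  refine ⟨Function.update u t v, fun s => ?_, ?_, ?_⟩
  · by_cases hs : s = t
    · subst hs; simpa using hqv
    · simpa [hs] using hqu s
  · refine Finset.sum_lt_sum (fun s _ => ?_) ⟨t, Finset.mem_univ t, by simpa using hvu⟩
    by_cases hs : s = t
    · subst hs; simpa using hvu.le
    · simp [hs]
  · -- A path lost by the move has value exactly `u t` at time `t`; at most one path does.
    have hsub : {i : Fin n | ∀ s, l s ≤ x i s ∧ x i s ≤ u s} ⊆
        {i : Fin n | ∀ s, l s ≤ x i s ∧ x i s ≤ Function.update u t v s} ∪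
          {i : Fin n | x i t = u t} := by
      intro i hi
      rcases (hi t).2.lt_or_eq with h | h
      · refine Or.inl fun s => ⟨(hi s).1, ?_⟩
        by_cases hs : s = t
        · subst hs; simpa using hv i h
        · simpa [hs] using (hi s).2
      · exact Or.inr h
    have hone : {i : Fin n | x i t = u t}.ncard ≤ 1 :=
      (Set.ncard_le_one (Set.toFinite _)).2 fun i hi j hj =>
        hdist t (Eq.trans hi (Eq.symm hj))
    exact ((Set.ncard_le_ncard hsub (Set.toFinite _)).trans (Set.ncard_union_le _ _)).trans
      (Nat.add_le_add_left hone _)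

lemma exists_lower_shrink {H n : ℕ} (x : Fin n → Fin H → ℝ)
    (hdist : ∀ t : Fin H, Function.Injective fun i => x i t)
    (q l u : Fin H → ℝ) (hql : ∀ t, l t ≤ q t) (t : Fin H) (ht : l t < q t) :
    ∃ l' : Fin H → ℝ, (∀ s, l' s ≤ q s) ∧ ∑ s, l s < ∑ s, l' s ∧
      coverCount x l u ≤ coverCount x l' u + 1 := by
  obtain ⟨w, hw, hsum, hc⟩ := exists_upper_shrink (fun i t => -x i t)
    (fun t i j h => hdist t (neg_injective h))
    (fun t => -q t) (fun t => -u t) (fun t => -l t)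
    (fun t => neg_le_neg (hql t)) t (neg_lt_neg ht)
  refine ⟨fun s => -w s, fun s => by linarith [hw s], ?_, ?_⟩
  · simp only [Finset.sum_neg_distrib] at hsum ⊢
    linarith
  · have h := coverCount_neg x (fun s => -w s) u
    simp only [neg_neg] at h
    rwa [coverCount_neg, h] at hc

/-- **Lemma 2.** Let `(l̂, û)` be an optimal solution of (NP) of width `w*`, and let
`W` be the set of bands satisfying the quantile constraints with width at most `w*`.
Then (i) every band in `W` covers at most `m` of the `n` sample paths, and
(ii) the band `(l̂, û)` belongs to `W` and covers exactly `m` of them, so the maximum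
number of covered paths over `W` equals `m`. -/
theorem flipped_problem_max_coverage_eq_m
    (H n : ℕ) (hH : 1 ≤ H) (hn : 1 ≤ n)
    (x : Fin n → Fin H → ℝ)
    (hdist : ∀ t : Fin H, Function.Injective fun i => x i t)
    (qu ql : Fin H → ℝ) (m : ℕ) (hm1 : 1 ≤ m) (hmn : m ≤ n)
    (hq : coverCount x ql qu < m)
    (lhat uhat : Fin H → ℝ)
    (hfeas : (∀ t, qu t ≤ uhat t) ∧ (∀ t, lhat t ≤ ql t) ∧ m ≤ coverCount x lhat uhat)
    (hopt : ∀ l u : Fin H → ℝ,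
      ((∀ t, qu t ≤ u t) ∧ (∀ t, l t ≤ ql t) ∧ m ≤ coverCount x l u) →
      ∑ t, (uhat t - lhat t) ≤ ∑ t, (u t - l t))
    (wstar : ℝ) (hw : wstar = ∑ t, (uhat t - lhat t)) :
    (∀ l u : Fin H → ℝ,
      (∀ t, qu t ≤ u t) → (∀ t, l t ≤ ql t) → ∑ t, (u t - l t) ≤ wstar →
      coverCount x l u ≤ m) ∧
    ((∀ t, qu t ≤ uhat t) ∧ (∀ t, lhat t ≤ ql t) ∧ ∑ t, (uhat t - lhat t) ≤ wstar ∧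
      coverCount x lhat uhat = m) := by
  have key : ∀ l u : Fin H → ℝ,
      (∀ t, qu t ≤ u t) → (∀ t, l t ≤ ql t) → ∑ t, (u t - l t) ≤ wstar →
      coverCount x l u ≤ m := by
    intro l u hu hl hwid
    by_contra! hcov
    have hex : ∃ t, qu t < u t ∨ l t < ql t := by
      by_contra! hno
      have h1 : u = qu := funext fun t => le_antisymm (hno t).1 (hu t)
      have h2 : l = ql := funext fun t => le_antisymm (hl t) (hno t).2
      rw [h1, h2] at hcov
      omega
    obtain ⟨t, ht | ht⟩ := hex
    · obtain ⟨u', hu', hsum, hc⟩ := exists_upper_shrink x hdist qu l u hu t ht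
      have h := hopt l u' ⟨hu', hl, by omega⟩
      simp only [Finset.sum_sub_distrib] at h hwid hw
      linarith
    · obtain ⟨l', hl', hsum, hc⟩ := exists_lower_shrink x hdist ql l u hl t ht
      have h := hopt l' u ⟨hu, hl', by omega⟩
      simp only [Finset.sum_sub_distrib] at h hwid hw
      linarith
  obtain ⟨hu, hl, hc⟩ := hfeas
  exact ⟨key, hu, hl, hw.ge, le_antisymm (key lhat uhat hu hl hw.ge) hc⟩
end

section
/- Let H ≥ 1, let c : Fin H → ℝ with c_t > 0 for all t, and let σ be a permutation of Fin H such that c∘σ is nonincreasing; write c_(j) = c(σ(j)) for the j-th largest value of c. Let Γ ∈ [0, 1] and set t* = max(⌈ΓH⌉, 1). Then the value Σ_{t=1}^H max(c_t − c_(t*), 0) + Γ·H·c_(t*) is the least element of the set {Σ_{t=1}^H λ_t + Γ·H·ρ : λ ∈ ℝ^H, ρ ∈ ℝ, λ_t ≥ 0 for all t, ρ ≥ 0, λ_t + ρ ≥ c_t for all t}; moreover this minimum is attained at ρ = c_(t*) and λ_t = max(c_t − c_(t*), 0) for all t. -/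
/-!
Feasibility and attainment are immediate; minimality is weak duality with complementary slackness.
With `K = Γ * H`, the primal solution puts weight `1` on the `j` largest entries of `c`,
weight `K - j ∈ [0, 1]` on the next one and `0` elsewhere, so the total weight is `K`
(`sum_greedyWeight`). Write `v = c (σ j)`. The weight `z` of an entry `a` is `1` where `a > v` and
`0` where `a < v`, so `z * (a - v) = max (a - v) 0`, while any dual feasible `(lam, ρ)` has
`lam ≥ z * (a - ρ)` at that entry. Hence `z * (v - ρ) ≤ lam - max (a - v) 0`, and summing over all
entries gives `K * (v - ρ) ≤ ∑ lam - ∑ max (c t - v) 0`.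
-/

/-- The greedy primal solution of budget `K`, indexed by rank: the first `j` ranks are filled
completely and rank `j` receives the remainder `K - j`. -/
noncomputable def greedyWeight {H : ℕ} (j : Fin H) (K : ℝ) (i : Fin H) : ℝ :=
  (if i < j then 1 else 0) + (if i = j then K - (j : ℕ) else 0)

lemma sum_greedyWeight {H : ℕ} (j : Fin H) (K : ℝ) : ∑ i, greedyWeight j K i = K := by
  have h : (Finset.univ.filter (· < j)) = Finset.Iio j := by ext; simp
  simp [greedyWeight, Finset.sum_add_distrib, Finset.sum_boole, h, Fin.card_Iio]

/-- The rank `j` with `j + 1 = max ⌈K⌉₊ 1` leaves a remainder `K - j` in `[0, 1]`; the `max`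
covers the case `K = 0`, where `j = 0`. -/
lemma rank_le_and_le_succ {j : ℕ} {K : ℝ} (hK : 0 ≤ K) (hj : j + 1 = max ⌈K⌉₊ 1) :
    (j : ℝ) ≤ K ∧ K ≤ j + 1 := by
  constructor
  · rcases Nat.eq_zero_or_pos j with rfl | h
    · simpa using hK
    · exact (Nat.lt_ceil.mp (by omega : j < ⌈K⌉₊)).le
  · have h : ⌈K⌉₊ ≤ j + 1 := by omega
    exact_mod_cast Nat.ceil_le.mp h

/-- **Optimal value of the dual LP (key step of Proposition 2).** Let `c > 0`
componentwise, `σ` a permutation sorting `c` in nonincreasing order, `Γ ∈ [0,1]`,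
and `j` the index with `j + 1 = t* = max(⌈ΓH⌉, 1)`. Then
`∑ t, max (c t - c_(t*)) 0 + Γ·H·c_(t*)` is the least value of
`∑ t, λ t + Γ·H·ρ` over `λ ≥ 0`, `ρ ≥ 0` with `λ t + ρ ≥ c t` for all `t`; moreover
the minimum is attained at `ρ = c_(t*)` and `λ t = max (c t - c_(t*)) 0`, which is a
feasible dual solution. -/
theorem dual_lp_min_value
    (H : ℕ) (hH : 1 ≤ H) (c : Fin H → ℝ) (hc : ∀ t, 0 < c t)
    (σ : Equiv.Perm (Fin H)) (hσ : Antitone (c ∘ σ))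
    (Γ : ℝ) (hΓ0 : 0 ≤ Γ) (hΓ1 : Γ ≤ 1)
    (j : Fin H) (hj : (j : ℕ) + 1 = max ⌈Γ * (H : ℝ)⌉₊ 1) :
    IsLeast
      {S : ℝ | ∃ (lam : Fin H → ℝ) (ρ : ℝ),
        (∀ t, 0 ≤ lam t) ∧ 0 ≤ ρ ∧ (∀ t, c t ≤ lam t + ρ) ∧
        S = (∑ t, lam t) + Γ * (H : ℝ) * ρ}
      ((∑ t, max (c t - c (σ j)) 0) + Γ * (H : ℝ) * c (σ j)) ∧
    ((∀ t, 0 ≤ max (c t - c (σ j)) 0) ∧ 0 ≤ c (σ j) ∧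
      (∀ t, c t ≤ max (c t - c (σ j)) 0 + c (σ j))) := by
  have hfeas : ∀ t, c t ≤ max (c t - c (σ j)) 0 + c (σ j) := fun t => by
    linarith [le_max_left (c t - c (σ j)) 0]
  have hpos : ∀ t, 0 ≤ max (c t - c (σ j)) 0 := fun t => le_max_right _ _
  refine ⟨⟨⟨_, _, hpos, (hc _).le, hfeas, rfl⟩, ?_⟩, hpos, (hc _).le, hfeas⟩
  rintro S ⟨lam, ρ, hlam, -, hcov, rfl⟩
  obtain ⟨hlo, hhi⟩ := rank_le_and_le_succ (mul_nonneg hΓ0 H.cast_nonneg) hj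
  have key : ∀ i, greedyWeight j (Γ * H) i * (c (σ j) - ρ)
      ≤ lam (σ i) - max (c (σ i) - c (σ j)) 0 := by
    intro i
    have h1 := hlam (σ i)
    have h2 := hcov (σ i)
    rcases lt_trichotomy i j with h | rfl | h
    · have h3 : c (σ j) ≤ c (σ i) := hσ h.le
      rw [max_eq_left (by linarith)]
      simp only [greedyWeight, h, h.ne, if_true, if_false]
      linarith
    · simp only [greedyWeight, lt_irrefl, if_true, if_false, sub_self, max_self]
      -- the remainder is a convex weight, so it cannot exceed the larger of `0` and `v - ρ`
      nlinarith
    · have h3 : c (σ i) ≤ c (σ j) := hσ h.le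
      rw [max_eq_right (by linarith)]
      simp only [greedyWeight, h.not_gt, h.ne', if_false]
      linarith
  have hsum := Finset.sum_le_sum fun i (_ : i ∈ Finset.univ) => key i
  rw [← Finset.sum_mul, sum_greedyWeight, Finset.sum_sub_distrib, Equiv.sum_comp σ lam,
    Equiv.sum_comp σ fun t => max (c t - c (σ j)) 0] at hsum
  linarith
end
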